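/- arXiv:2101.05880 — 5 statements merged into one kernel-verified Lean document; each statement's English description precedes it below -/
import Mathlib

section
/- For any λ > 0, the vector α* ∈ ℝ^N defined by α*_i = (m_i/M_p)·[ 1 + M_p·(L̄_p − L̂_i)/λ ]_+ for each i, where [x]_+ = max(0, x) and p = max{ k ∈ {1, …, N} : 1 + M_k·(L̄_k − L̂_k)/λ > 0 }, is a minimizer of F(α) = Σ_{i=1}^N α_i·L̂_i + (λ/2)·Σ_{i=1}^N α_i²/m_i over the simplex Δ = { α ∈ ℝ^N : α_i ≥ 0 for all i, Σ_{i=1}^N α_i = 1 }. -/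
/-!
Write `p` for the cut-off index and `c = L̄_p + λ/M_p`. Then `α*_i = (m_i/λ)·[c - L̂_i]₊`, so `c` is
the Lagrange multiplier of the constraint `Σ α_i = 1` (water-filling).

Membership of `p` in the good set says `L̂_p < c`, and failure of `p + 1` says `c ≤ L̂_{p+1}`
(`exists_waterLevel`). As the losses are sorted, exactly the first `p` coordinates are
active, and the definition of `c` makes them sum to one. Minimality is the tangent
inequality `c (β_i - α_i) ≤ f_i(β_i) - f_i(α_i)` for each summand `f_i` of the objective
(`tangent_ineq`); summing over `i` cancels the left-hand side, as both vectors sum to one.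
-/

open Finset

noncomputable section

/-- `Mpart m k = Σ_{i=1}^k m_i`: total number of samples of the first `k` clients
(clients are 0-indexed, so these are clients `0, …, k-1`). -/
def Mpart (m : ℕ → ℝ) (k : ℕ) : ℝ := ∑ i ∈ Finset.range k, m i

/-- `Lbar m L k = (Σ_{i=1}^k m_i·L̂_i) / M_k`: the `k`-average loss. -/
def Lbar (m L : ℕ → ℝ) (k : ℕ) : ℝ :=
  (∑ i ∈ Finset.range k, m i * L i) / Mpart m k

/-- The set `{ k ∈ {1, …, N} : 1 + M_k·(L̄_k − L̂_k)/λ > 0 }`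
(with `L̂_k = L (k-1)` since losses are 0-indexed). -/
def goodSet (m L : ℕ → ℝ) (lam : ℝ) (N : ℕ) : Set ℕ :=
  {k | k ∈ Finset.Icc 1 N ∧ 0 < 1 + Mpart m k * (Lbar m L k - L (k - 1)) / lam}

/-- `p = max{ k ∈ {1,…,N} : 1 + M_k·(L̄_k − L̂_k)/λ > 0 }`. -/
def pIdx (m L : ℕ → ℝ) (lam : ℝ) (N : ℕ) : ℕ := sSup (goodSet m L lam N)

/-- The optimal weights `α*_i = (m_i/M_p)·[1 + M_p·(L̄_p − L̂_i)/λ]₊` (client `i` 0-indexed). -/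
def alphaStar (m L : ℕ → ℝ) (lam : ℝ) (N : ℕ) (i : ℕ) : ℝ :=
  (m i / Mpart m (pIdx m L lam N)) *
    max 0 (1 + Mpart m (pIdx m L lam N) * (Lbar m L (pIdx m L lam N) - L i) / lam)

/-- The objective `F(α) = Σ_i α_i·L̂_i + (λ/2)·Σ_i α_i²/m_i`. -/
def objF (N : ℕ) (m L : ℕ → ℝ) (lam : ℝ) (α : ℕ → ℝ) : ℝ :=
  ∑ i ∈ Finset.range N, α i * L i + lam / 2 * ∑ i ∈ Finset.range N, (α i) ^ 2 / m i

/-- The cut-off index `p` and the water level `c`: clients before `p` lie strictly below the level,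
the remaining ones at or above it, and the `m`-weighted gap below the level is exactly `λ`. -/
lemma exists_waterLevel (N : ℕ) (hN : 1 ≤ N) (m L : ℕ → ℝ)
    (hm : ∀ i < N, 0 < m i)
    (hL : ∀ i j, i ≤ j → j < N → L i ≤ L j)
    (lam : ℝ) (hlam : 0 < lam) :
    ∃ (p : ℕ) (c : ℝ), p ≤ N ∧
      (∀ i, alphaStar m L lam N i = m i / lam * max 0 (c - L i)) ∧
      (∀ i < p, L i < c) ∧ (∀ i < N, p ≤ i → c ≤ L i) ∧
      ∑ i ∈ Finset.range p, m i * (c - L i) = lam := by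
  have hMpos : ∀ k, 1 ≤ k → k ≤ N → 0 < Mpart m k := fun k h1 hk =>
    Finset.sum_pos (fun i hi => hm i (by have := Finset.mem_range.1 hi; omega))
      ⟨0, Finset.mem_range.2 (by omega)⟩
  -- Membership in the good set, cleared of denominators.
  have hgood : ∀ k, 1 ≤ k → k ≤ N → (k ∈ goodSet m L lam N ↔
      0 < lam + ∑ i ∈ Finset.range k, m i * L i - Mpart m k * L (k - 1)) := by
    intro k h1 hk
    have hM := hMpos k h1 hk
    have e : 1 + Mpart m k * (Lbar m L k - L (k - 1)) / lam =
        (lam + ∑ i ∈ Finset.range k, m i * L i - Mpart m k * L (k - 1)) / lam := by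
      unfold Lbar; field_simp; ring
    simp only [goodSet, Set.mem_ofPred_eq, Finset.mem_Icc, e, h1, hk, and_self, true_and]
    rw [div_pos_iff_of_pos_right hlam]
  have hne : (goodSet m L lam N).Nonempty :=
    ⟨1, (hgood 1 le_rfl hN).2 (by simp [Mpart, hlam])⟩
  have hbdd : BddAbove (goodSet m L lam N) := ⟨N, fun k hk => (Finset.mem_Icc.1 hk.1).2⟩
  have hp : pIdx m L lam N ∈ goodSet m L lam N := Nat.sSup_mem hne hbdd
  have hmax : ∀ k ∈ goodSet m L lam N, k ≤ pIdx m L lam N := fun k hk => le_csSup hbdd hk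
  have hal : ∀ i, alphaStar m L lam N i = (m i / Mpart m (pIdx m L lam N)) *
    max 0 (1 + Mpart m (pIdx m L lam N) * (Lbar m L (pIdx m L lam N) - L i) / lam) :=
    fun i => rfl
  generalize pIdx m L lam N = p at hp hmax hal
  obtain ⟨hp1, hpN⟩ := Finset.mem_Icc.1 hp.1
  have hM := hMpos p hp1 hpN
  have hg := (hgood p hp1 hpN).1 hp
  have hc : Mpart m p * (Lbar m L p + lam / Mpart m p) =
      lam + ∑ i ∈ Finset.range p, m i * L i := by
    unfold Lbar; field_simp; ring
  refine ⟨p, Lbar m L p + lam / Mpart m p, hpN, ?_, ?_, ?_, ?_⟩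
  · intro i
    have e : 1 + Mpart m p * (Lbar m L p - L i) / lam =
        Mpart m p / lam * (Lbar m L p + lam / Mpart m p - L i) := by
      field_simp; ring
    have hq : 0 ≤ Mpart m p / lam := by positivity
    rw [hal, e]
    nth_rewrite 1 [← mul_zero (Mpart m p / lam)]
    rw [← mul_max_of_nonneg _ _ hq]
    field_simp
  · intro i hi
    refine lt_of_le_of_lt (hL i (p - 1) (by omega) (by omega)) ?_
    refine lt_of_mul_lt_mul_left ?_ hM.le
    rw [hc]; linarith
  · intro i hi hpi
    refine le_trans ?_ (hL p i hpi hi)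
    have hnot : p + 1 ∉ goodSet m L lam N := fun h => by have := hmax _ h; omega
    rw [hgood (p + 1) (by omega) (by omega), not_lt] at hnot
    -- The terms of index `p` cancel, turning failure at `p + 1` into a bound on `c`.
    simp only [Mpart, Finset.sum_range_succ, Nat.add_sub_cancel] at hnot
    refine le_of_mul_le_mul_left ?_ hM
    rw [hc]; simp only [Mpart]; linarith
  · simp only [mul_sub, Finset.sum_sub_distrib, ← Finset.sum_mul]
    change Mpart m p * _ - _ = _
    rw [hc]; ring

/-- Optimality in one coordinate: `a = (m/λ)·[c - l]₊` minimizes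
`x ↦ x l + λ x² / (2m) - c x` over `x ≥ 0`. -/
lemma tangent_ineq {m l lam c b : ℝ} (hm : 0 < m) (hlam : 0 < lam) (hb : 0 ≤ b) :
    c * (b - m / lam * max 0 (c - l)) ≤ (b * l + lam / 2 * (b ^ 2 / m)) -
      (m / lam * max 0 (c - l) * l + lam / 2 * ((m / lam * max 0 (c - l)) ^ 2 / m)) := by
  rcases le_total c l with h | h
  · rw [max_eq_left (by linarith)]
    have h1 : 0 ≤ lam / 2 * (b ^ 2 / m) := by positivity
    have h2 := mul_nonneg hb (sub_nonneg.2 h)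
    simp only [mul_zero, zero_mul, ne_eq, OfNat.ofNat_ne_zero, not_false_eq_true, zero_pow,
      zero_div]
    linarith
  · rw [max_eq_right (by linarith), ← sub_nonneg]
    have h1 : 0 ≤ lam / (2 * m) * (b - m / lam * (c - l)) ^ 2 := by positivity
    convert h1 using 1
    field_simp
    ring

/-- `α*` is a minimizer of `F` over the simplex. -/
theorem alphaStar_isMinOn_simplex
    (N : ℕ) (hN : 1 ≤ N) (m L : ℕ → ℝ)
    (hm : ∀ i < N, 0 < m i)
    (hL : ∀ i j, i ≤ j → j < N → L i ≤ L j)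
    (lam : ℝ) (hlam : 0 < lam) :
    ((∀ i < N, 0 ≤ alphaStar m L lam N i) ∧
      ∑ i ∈ Finset.range N, alphaStar m L lam N i = 1) ∧
    ∀ β : ℕ → ℝ, (∀ i < N, 0 ≤ β i) → ∑ i ∈ Finset.range N, β i = 1 →
      objF N m L lam (alphaStar m L lam N) ≤ objF N m L lam β := by
  obtain ⟨p, c, hpN, hal, hlt, hge, hsum⟩ := exists_waterLevel N hN m L hm hL lam hlam
  have hone : ∑ i ∈ Finset.range N, alphaStar m L lam N i = 1 := by
    rw [← Finset.sum_subset (Finset.range_subset_range.2 hpN)]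
    · have e : ∀ i ∈ Finset.range p, alphaStar m L lam N i = m i * (c - L i) / lam := by
        intro i hi
        rw [hal, max_eq_right (by linarith [hlt i (Finset.mem_range.1 hi)])]
        ring
      rw [Finset.sum_congr rfl e, ← Finset.sum_div, hsum, div_self hlam.ne']
    · intro i hi hip
      have := hge i (Finset.mem_range.1 hi) (by simpa using hip)
      rw [hal, max_eq_left (by linarith), mul_zero]
  refine ⟨⟨fun i hi => ?_, hone⟩, fun β hβ hβ1 => ?_⟩
  · rw [hal]
    exact mul_nonneg (div_nonneg (hm i hi).le hlam.le) (le_max_left _ _)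
  · have key : ∑ i ∈ Finset.range N, c * (β i - alphaStar m L lam N i) ≤
        ∑ i ∈ Finset.range N, ((β i * L i + lam / 2 * (β i ^ 2 / m i)) -
          (alphaStar m L lam N i * L i + lam / 2 * (alphaStar m L lam N i ^ 2 / m i))) := by
      refine Finset.sum_le_sum fun i hi => ?_
      have hi' := Finset.mem_range.1 hi
      rw [hal]
      exact tangent_ineq (hm i hi') hlam (hβ i hi')
    rw [← Finset.mul_sum, Finset.sum_sub_distrib, hβ1, hone, Finset.sum_sub_distrib,
      Finset.sum_add_distrib, Finset.sum_add_distrib, ← Finset.mul_sum, ← Finset.mul_sum] at key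
    unfold objF
    linarith
end
end

section
/- For every k ∈ {1, …, N−1}, the identity M_{k+1}·(L̄_{k+1} − L̂_{k+1}) = M_k·(L̄_k − L̂_{k+1}) holds. Consequently, if 1 + M_k·(L̄_k − L̂_k)/λ ≤ 0 for some k, then 1 + M_{k'}·(L̄_{k'} − L̂_{k'})/λ ≤ 0 for all k' ≥ k; that is, the set { k : 1 + M_k·(L̄_k − L̂_k)/λ > 0 } is an interval {1, …, p} starting at 1. -/
/-!
Write `A_k = M_k (L̄_k - L̂_k)`. Since `M_k L̄_k` is the partial sum `Σ_{i ≤ k} m_i L̂_i`, passing from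
`k` to `k + 1` adds `m_{k+1} L̂_{k+1}` to `M_k L̄_k` and `m_{k+1}` to `M_k`; these cancel in
`A_{k+1}`, which is the identity `A_{k+1} = M_k (L̄_k - L̂_{k+1})` (`Mpart_mul_Lbar_sub_succ`).
As `L̂_{k+1} ≥ L̂_k` and `M_k ≥ 0`, the sequence `A_k` is antitone on `{1, …, N}`
(`Mpart_mul_Lbar_sub_antitone`), so the condition `1 + A_k / λ > 0` is downward closed. It holds at
`k = 1`, where `A_1 = 0`, so the good set is nonempty and bounded, and equals `{1, …, p}` with `p`
its maximum.
-/

open Finset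

noncomputable section

lemma Mpart_nonneg {N : ℕ} {m : ℕ → ℝ} (hm : ∀ i < N, 0 < m i) {k : ℕ} (hk : k ≤ N) :
    0 ≤ Mpart m k :=
  Finset.sum_nonneg fun i hi => (hm i (by have := Finset.mem_range.1 hi; omega)).le

/-- For `k = 0` both sides vanish, so positivity of `k` is not required. -/
lemma Mpart_mul_Lbar {N : ℕ} {m : ℕ → ℝ} (L : ℕ → ℝ) (hm : ∀ i < N, 0 < m i) {k : ℕ}
    (hk : k ≤ N) : Mpart m k * Lbar m L k = ∑ i ∈ Finset.range k, m i * L i := by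
  rcases Nat.eq_zero_or_pos k with rfl | hpos
  · simp [Mpart]
  · have hM : 0 < Mpart m k :=
      Finset.sum_pos (fun i hi => hm i (by have := Finset.mem_range.1 hi; omega))
        ⟨0, Finset.mem_range.2 hpos⟩
    exact mul_div_cancel₀ _ hM.ne'

lemma Mpart_mul_Lbar_sub_succ {N : ℕ} {m : ℕ → ℝ} (L : ℕ → ℝ) (hm : ∀ i < N, 0 < m i) {k : ℕ}
    (hk : k + 1 ≤ N) :
    Mpart m (k + 1) * (Lbar m L (k + 1) - L k) = Mpart m k * (Lbar m L k - L k) := by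
  rw [mul_sub, mul_sub, Mpart_mul_Lbar L hm hk, Mpart_mul_Lbar L hm (by omega),
    Finset.sum_range_succ, Mpart, Mpart, Finset.sum_range_succ]
  ring

lemma Mpart_mul_Lbar_sub_antitone {N : ℕ} {m L : ℕ → ℝ} (hm : ∀ i < N, 0 < m i)
    (hL : ∀ i j, i ≤ j → j < N → L i ≤ L j) {k k' : ℕ} (hkk' : k ≤ k') (hk' : k' ≤ N) :
    Mpart m k' * (Lbar m L k' - L (k' - 1)) ≤ Mpart m k * (Lbar m L k - L (k - 1)) := by
  induction k', hkk' using Nat.le_induction with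
  | base => exact le_rfl
  | succ n _ ih =>
    refine le_trans ?_ (ih (by omega))
    rw [Nat.add_sub_cancel, Mpart_mul_Lbar_sub_succ L hm hk']
    have hLn : L (n - 1) ≤ L n := hL _ _ (by omega) (by omega)
    exact mul_le_mul_of_nonneg_left (by linarith) (Mpart_nonneg hm (by omega))

/-- the identity `M_{k+1}(L̄_{k+1} − L̂_{k+1}) = M_k(L̄_k − L̂_{k+1})`
(with `L̂_{k+1} = L k` in 0-indexed losses); consequently the defining condition of `p`
is downward closed, and the good set is exactly the interval `{1, …, p}`. -/
theorem goodSet_is_interval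
    (N : ℕ) (hN : 1 ≤ N) (m L : ℕ → ℝ)
    (hm : ∀ i < N, 0 < m i)
    (hL : ∀ i j, i ≤ j → j < N → L i ≤ L j)
    (lam : ℝ) (hlam : 0 < lam) :
    (∀ k, 1 ≤ k → k + 1 ≤ N →
      Mpart m (k + 1) * (Lbar m L (k + 1) - L k) = Mpart m k * (Lbar m L k - L k)) ∧
    (∀ k k', 1 ≤ k → k ≤ k' → k' ≤ N →
      1 + Mpart m k * (Lbar m L k - L (k - 1)) / lam ≤ 0 →
      1 + Mpart m k' * (Lbar m L k' - L (k' - 1)) / lam ≤ 0) ∧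
    goodSet m L lam N = Set.Icc 1 (pIdx m L lam N) := by
  have anti : ∀ k k', k ≤ k' → k' ≤ N →
      1 + Mpart m k' * (Lbar m L k' - L (k' - 1)) / lam ≤
        1 + Mpart m k * (Lbar m L k - L (k - 1)) / lam := by
    intro k k' hkk' hk'
    have := Mpart_mul_Lbar_sub_antitone hm hL hkk' hk'
    gcongr
  refine ⟨fun k _ hk => Mpart_mul_Lbar_sub_succ L hm hk,
    fun k k' _ hkk' hk' h => (anti k k' hkk' hk').trans h, ?_⟩
  have one_mem : 1 ∈ goodSet m L lam N := by
    refine ⟨Finset.mem_Icc.2 ⟨le_rfl, hN⟩, ?_⟩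
    -- The identity at `k = 0` gives `A_1 = M_0 (L̄_0 - L̂_1) = 0`.
    have h := Mpart_mul_Lbar_sub_succ L hm (k := 0) hN
    rw [zero_add] at h
    rw [Nat.sub_self, h]
    simp [Mpart]
  have bdd : BddAbove (goodSet m L lam N) := ⟨N, fun k hk => (Finset.mem_Icc.1 hk.1).2⟩
  have p_mem : pIdx m L lam N ∈ goodSet m L lam N := Nat.sSup_mem ⟨1, one_mem⟩ bdd
  have p_le : pIdx m L lam N ≤ N := (Finset.mem_Icc.1 p_mem.1).2
  ext k
  constructor
  · intro hk
    exact ⟨(Finset.mem_Icc.1 hk.1).1, le_csSup bdd hk⟩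
  · rintro ⟨h1, hkp⟩
    exact ⟨Finset.mem_Icc.2 ⟨h1, hkp.trans p_le⟩, p_mem.2.trans_le (anti _ _ hkp p_le)⟩
end
end

section
/- The vector α* with α*_i = (m_i/M_p)·[ 1 + M_p·(L̄_p − L̂_i)/λ ]_+ is a feasible point of the simplex: every entry is nonnegative, α*_i > 0 for i ≤ p, α*_i = 0 for i > p, and Σ_{i=1}^N α*_i = 1. -/
/-!
Write `S_k = Σ_{i<k} m_i L_i`, so that `M_k (L̄_k - x) = S_k - M_k x` for every `x`
(`Mpart_mul_Lbar_sub`).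

The set defining `p` contains `1` and is bounded by `N`, so `p` belongs to it and `p + 1` does
not. Since `p` belongs to it, monotonicity of the losses makes the bracket positive for all
`i < p`. The term of index `p` cancels in `S_{p+1} - M_{p+1} L_p = S_p - M_p L_p`, so the failure
of the condition at `p + 1` says exactly that the bracket at `i = p` is nonpositive, and
monotonicity extends this to all `i ≥ p`. Finally, on `i < p` the positive part can be dropped,
and the terms `m_i (S_p - M_p L_i)` sum to `M_p S_p - M_p S_p = 0`, leaving `Σ m_i / M_p = 1`.
-/

open Finset

noncomputable section

theorem Mpart_mul_Lbar_sub (m L : ℕ → ℝ) (k : ℕ) (x : ℝ) (h : 0 < Mpart m k) :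
    Mpart m k * (Lbar m L k - x) = ∑ i ∈ Finset.range k, m i * L i - Mpart m k * x := by
  unfold Lbar
  field_simp

theorem Mpart_pos {N : ℕ} {m : ℕ → ℝ} (hm : ∀ i < N, 0 < m i) {k : ℕ} (hk : 1 ≤ k) (hkN : k ≤ N) :
    0 < Mpart m k :=
  Finset.sum_pos (fun i hi => hm i ((Finset.mem_range.1 hi).trans_le hkN))
    (Finset.nonempty_range_iff.2 (by omega))

theorem bddAbove_goodSet (m L : ℕ → ℝ) (lam : ℝ) (N : ℕ) : BddAbove (goodSet m L lam N) :=
  ⟨N, fun _ hk => (Finset.mem_Icc.1 hk.1).2⟩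

/-- The maximum defining `p` is attained: `k = 1` always qualifies, because `L̄_1 = L̂_1`. -/
theorem pIdx_mem {N : ℕ} (hN : 1 ≤ N) {m : ℕ → ℝ} (L : ℕ → ℝ) (hm : ∀ i < N, 0 < m i) (lam : ℝ) :
    pIdx m L lam N ∈ goodSet m L lam N := by
  refine Nat.sSup_mem ⟨1, Finset.mem_Icc.2 ⟨le_rfl, hN⟩, ?_⟩ (bddAbove_goodSet m L lam N)
  rw [Mpart_mul_Lbar_sub _ _ _ _ (Mpart_pos hm le_rfl hN)]
  simp [Mpart]

/-- `α*` is feasible: nonnegative entries, positive for `i ≤ p`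
(0-indexed: `i < p`), zero for `i > p` (0-indexed: `p ≤ i`), and summing to `1`. -/
theorem alphaStar_feasible
    (N : ℕ) (hN : 1 ≤ N) (m L : ℕ → ℝ)
    (hm : ∀ i < N, 0 < m i)
    (hL : ∀ i j, i ≤ j → j < N → L i ≤ L j)
    (lam : ℝ) (hlam : 0 < lam) :
    (∀ i < N, 0 ≤ alphaStar m L lam N i) ∧
    (∀ i < pIdx m L lam N, 0 < alphaStar m L lam N i) ∧
    (∀ i, pIdx m L lam N ≤ i → i < N → alphaStar m L lam N i = 0) ∧
    ∑ i ∈ Finset.range N, alphaStar m L lam N i = 1 := by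
  have hmem := pIdx_mem hN L hm lam
  have hmax : ∀ k ∈ goodSet m L lam N, k ≤ pIdx m L lam N :=
    fun k hk => le_csSup (bddAbove_goodSet m L lam N) hk
  unfold alphaStar
  generalize pIdx m L lam N = p at hmem hmax ⊢
  obtain ⟨hpI, hpos⟩ := hmem
  obtain ⟨hp1, hpN⟩ := Finset.mem_Icc.1 hpI
  have hM : 0 < Mpart m p := Mpart_pos hm hp1 hpN
  have hbr : ∀ i < p, 0 < 1 + Mpart m p * (Lbar m L p - L i) / lam := by
    intro i hi
    refine hpos.trans_le ?_
    have := hL i (p - 1) (by omega) (by omega)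
    gcongr
  have hzero : ∀ i, p ≤ i → i < N → 1 + Mpart m p * (Lbar m L p - L i) / lam ≤ 0 := by
    intro i hpi hiN
    have hnot : 1 + Mpart m (p + 1) * (Lbar m L (p + 1) - L p) / lam ≤ 0 := by
      by_contra! hcon
      have := hmax (p + 1) ⟨Finset.mem_Icc.2 ⟨by omega, by omega⟩, by simpa using hcon⟩
      omega
    -- The contribution of index `p` to `S_{p+1} - M_{p+1} L_p` vanishes.
    have hshift : Mpart m (p + 1) * (Lbar m L (p + 1) - L p) = Mpart m p * (Lbar m L p - L p) := by
      rw [Mpart_mul_Lbar_sub _ _ _ _ (Mpart_pos hm (by omega) (by omega)),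
        Mpart_mul_Lbar_sub _ _ _ _ hM]
      simp only [Mpart, Finset.sum_range_succ]
      ring
    rw [hshift] at hnot
    refine le_trans ?_ hnot
    have := hL p i hpi hiN
    gcongr
  have hvanish : ∀ i, p ≤ i → i < N →
      m i / Mpart m p * max 0 (1 + Mpart m p * (Lbar m L p - L i) / lam) = 0 := by
    intro i hpi hiN
    rw [max_eq_left (hzero i hpi hiN), mul_zero]
  refine ⟨fun i hi => ?_, fun i hi => ?_, hvanish, ?_⟩
  · exact mul_nonneg (div_pos (hm i hi) hM).le (le_max_left _ _)
  · exact mul_pos (div_pos (hm i (by omega)) hM) (lt_max_of_lt_right (hbr i hi))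
  · rw [← Finset.sum_subset (Finset.range_mono hpN) fun i hi hip =>
      hvanish i (by simpa using hip) (Finset.mem_range.1 hi)]
    set S := ∑ i ∈ Finset.range p, m i * L i with hS
    have hterm : ∀ i ∈ Finset.range p,
        m i / Mpart m p * max 0 (1 + Mpart m p * (Lbar m L p - L i) / lam)
          = m i * ((1 + S / lam) / Mpart m p) - m i * L i * (1 / lam) := by
      intro i hi
      rw [max_eq_right (hbr i (Finset.mem_range.1 hi)).le, Mpart_mul_Lbar_sub _ _ _ _ hM, ← hS]
      field_simp
      ring
    rw [Finset.sum_congr rfl hterm, Finset.sum_sub_distrib, ← Finset.sum_mul, ← Finset.sum_mul, ← hS]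
    change Mpart m p * _ - _ = _
    field_simp
    ring
end
end

section
/- Plugging the optimal weights α*_i = (m_i/M_p)·[ 1 + M_p·(L̄_p − L̂_i)/λ ]_+ into the objective F(α) = Σ_{i=1}^N α_i·L̂_i + (λ/2)·Σ_{i=1}^N α_i²/m_i yields the concentrated objective: F(α*) = Σ_{i=1}^N [ m_i/M_p + m_i·(L̄_p − L̂_i)/λ ]_+ · ( L̂_i + (1/2)·[ λ/M_p + L̄_p − L̂_i ]_+ ). -/
/-!
The identity holds term by term. With `x = [1 + M_p (L̄_p − L̂_i)/λ]₊`, the weight is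
`α*_i = (m_i/M_p) x`, and pulling the positive factors `m_i/M_p` and `λ/M_p` out of the positive
parts on the right-hand side turns them into `α*_i` and `λ α*_i / m_i`. This needs `M_p > 0`
(`Mpart_pIdx_pos`), which in turn rests on the maximum defining `p` being over a nonempty set.
-/

open Finset

noncomputable section

/-- `M_p > 0`. Since `L̄_1 = L̂_1`, the index `1` satisfies the condition defining `p`; the set is
bounded by `N`, so `p` is attained and lies in `{1, …, N}`. -/
theorem Mpart_pIdx_pos (N : ℕ) (hN : 1 ≤ N) (m L : ℕ → ℝ) (hm : ∀ i < N, 0 < m i) (lam : ℝ) :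
    0 < Mpart m (pIdx m L lam N) := by
  have h0 : 0 < m 0 := hm 0 hN
  have hne : (goodSet m L lam N).Nonempty := by
    refine ⟨1, Finset.mem_Icc.2 ⟨le_rfl, hN⟩, ?_⟩
    have hL1 : Lbar m L 1 = L 0 := by
      simp [Lbar, Mpart, h0.ne']
    simp [hL1]
  have hbdd : BddAbove (goodSet m L lam N) := ⟨N, fun k hk => (Finset.mem_Icc.1 hk.1).2⟩
  have hp : pIdx m L lam N ∈ goodSet m L lam N := Nat.sSup_mem hne hbdd
  obtain ⟨h1, h2⟩ := Finset.mem_Icc.1 hp.1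
  refine Finset.sum_pos (fun i hi => hm i ?_) ⟨0, Finset.mem_range.2 h1⟩
  exact (Finset.mem_range.1 hi).trans_le h2

/-- plugging `α*` into the objective yields the concentrated objective. -/
theorem objF_alphaStar_concentrated
    (N : ℕ) (hN : 1 ≤ N) (m L : ℕ → ℝ)
    (hm : ∀ i < N, 0 < m i)
    (hL : ∀ i j, i ≤ j → j < N → L i ≤ L j)
    (lam : ℝ) (hlam : 0 < lam) :
    objF N m L lam (alphaStar m L lam N) =
      ∑ i ∈ Finset.range N,
        max 0 (m i / Mpart m (pIdx m L lam N) +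
            m i * (Lbar m L (pIdx m L lam N) - L i) / lam) *
          (L i + (1 / 2) *
            max 0 (lam / Mpart m (pIdx m L lam N) +
              Lbar m L (pIdx m L lam N) - L i)) := by
  have hM := Mpart_pIdx_pos N hN m L hm lam
  unfold objF alphaStar
  generalize Mpart m (pIdx m L lam N) = M at hM ⊢
  generalize Lbar m L (pIdx m L lam N) = B
  rw [Finset.mul_sum, ← Finset.sum_add_distrib]
  refine Finset.sum_congr rfl fun i hi => ?_
  have hmi : 0 < m i := hm i (Finset.mem_range.1 hi)
  have e1 : m i / M + m i * (B - L i) / lam = m i / M * (1 + M * (B - L i) / lam) := by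
    field_simp
  have e2 : lam / M + B - L i = lam / M * (1 + M * (B - L i) / lam) := by
    field_simp
    ring
  -- Both positive parts on the right are positive multiples of the one in `α*`.
  have pull : ∀ c x : ℝ, 0 < c → max 0 (c * x) = c * max 0 x := fun c x hc => by
    rw [mul_max_of_nonneg _ _ hc.le, mul_zero]
  rw [e1, e2, pull _ _ (div_pos hmi hM), pull _ _ (div_pos hlam hM)]
  generalize max 0 (1 + M * (B - L i) / lam) = x
  field_simp
end
end

section
/- For every λ > M_N·(L̂_N − L̄_N), one has p = N, the optimal weights are α_i(λ) = (m_i/M_N)·( 1 + M_N·(L̄_N − L̂_i)/λ ), and as λ → ∞ the optimal weights converge to the sample-proportional weights: α_i(λ) → m_i/M_N for every i. -/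
/-!
The largest loss is at least the average loss, so the threshold `M_N·(L̂_N − L̄_N)` is nonnegative
(`threshold_nonneg`) and every `λ` above it is positive. Dividing by `λ`, the threshold condition
says exactly that `N` satisfies the inequality defining `p`, so `p = N`. By monotonicity of the
losses the bracket is positive for every client, so the positive part can be dropped. The limit is
that of the resulting explicit formula, whose correction term is a constant divided by `λ`.
-/

open Finset

noncomputable section

/-- Since `L̂_{N}` is the largest loss, it is at least the average; hence every `λ` above the
threshold is positive. -/
lemma threshold_nonneg (N : ℕ) (m L : ℕ → ℝ) (hm : ∀ i < N, 0 < m i)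
    (hL : ∀ i j, i ≤ j → j < N → L i ≤ L j) (hM : 0 < Mpart m N) :
    0 ≤ Mpart m N * (L (N - 1) - Lbar m L N) := by
  have key : ∑ i ∈ Finset.range N, m i * L i ≤ Mpart m N * L (N - 1) := by
    rw [Mpart, Finset.sum_mul]
    refine Finset.sum_le_sum fun i hi => ?_
    have hi' := Finset.mem_range.mp hi
    exact mul_le_mul_of_nonneg_left (hL i (N - 1) (by omega) (by omega)) (hm i hi').le
  have e : Mpart m N * Lbar m L N = ∑ i ∈ Finset.range N, m i * L i := by
    rw [Lbar]; field_simp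
  rw [mul_sub, e]
  linarith

/-- for `λ > M_N·(L̂_N − L̄_N)` one has `p = N` and
`α_i(λ) = (m_i/M_N)·(1 + M_N·(L̄_N − L̂_i)/λ)`; as `λ → ∞` the weights converge to
the sample-proportional weights `m_i/M_N`. -/
theorem alphaStar_large_lambda
    (N : ℕ) (hN : 1 ≤ N) (m L : ℕ → ℝ)
    (hm : ∀ i < N, 0 < m i)
    (hL : ∀ i j, i ≤ j → j < N → L i ≤ L j) :
    (∀ lam : ℝ, Mpart m N * (L (N - 1) - Lbar m L N) < lam →
      pIdx m L lam N = N ∧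
      ∀ i < N, alphaStar m L lam N i =
        (m i / Mpart m N) * (1 + Mpart m N * (Lbar m L N - L i) / lam)) ∧
    ∀ i < N, Filter.Tendsto (fun lam : ℝ => alphaStar m L lam N i)
      Filter.atTop (nhds (m i / Mpart m N)) := by
  have hM : 0 < Mpart m N :=
    Finset.sum_pos (fun i hi => hm i (Finset.mem_range.mp hi)) ⟨0, Finset.mem_range.mpr hN⟩
  have h0 := threshold_nonneg N m L hm hL hM
  have main : ∀ lam : ℝ, Mpart m N * (L (N - 1) - Lbar m L N) < lam →
      pIdx m L lam N = N ∧
      ∀ i < N, alphaStar m L lam N i =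
        (m i / Mpart m N) * (1 + Mpart m N * (Lbar m L N - L i) / lam) := by
    intro lam hlam
    have hpos : 0 < lam := h0.trans_lt hlam
    -- The bracket is positive at the largest loss, hence at every loss.
    have hbr : ∀ i < N, 0 < 1 + Mpart m N * (Lbar m L N - L i) / lam := by
      intro i hi
      have h1 := mul_le_mul_of_nonneg_left (hL i (N - 1) (by omega) (by omega)) hM.le
      have h2 : -1 < Mpart m N * (Lbar m L N - L i) / lam := by
        rw [lt_div_iff₀ hpos]
        linarith
      linarith
    have hp : pIdx m L lam N = N := by
      have hg : IsGreatest (goodSet m L lam N) N :=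
        ⟨⟨Finset.mem_Icc.mpr ⟨hN, le_rfl⟩, hbr (N - 1) (by omega)⟩,
          fun k hk => (Finset.mem_Icc.mp hk.1).2⟩
      exact hg.csSup_eq
    refine ⟨hp, fun i hi => ?_⟩
    rw [alphaStar, hp, max_eq_right (hbr i hi).le]
  refine ⟨main, fun i hi => ?_⟩
  have ht : Filter.Tendsto
      (fun lam : ℝ => (m i / Mpart m N) * (1 + Mpart m N * (Lbar m L N - L i) / lam))
      Filter.atTop (nhds (m i / Mpart m N)) := by
    have h := ((Filter.tendsto_id (α := ℝ) (x := Filter.atTop)).const_div_atTop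
      (Mpart m N * (Lbar m L N - L i))).const_add 1 |>.const_mul (m i / Mpart m N)
    simpa using h
  refine ht.congr' ?_
  filter_upwards [Filter.eventually_gt_atTop (Mpart m N * (L (N - 1) - Lbar m L N))] with lam hlam
  exact ((main lam hlam).2 i hi).symm
end
end
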